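/- Let (H, x, Y) be an sl2-triple in a finite-dimensional Lie algebra g over a field k of characteristic zero. Let 𝔳 be the supremum of the subspaces g_i over all integers i ≥ 2. Then the commutator subspace ⁅𝔳, 𝔳⁆ (the k-span of all brackets ⁅a, b⁆ with a, b ∈ 𝔳) equals the supremum of the subspaces g_i over all integers i ≥ 4. -/

import Mathlib

/-- The `i`-eigenspace of `ad H` on a Lie algebra `g`:
`g_i = {z ∈ g | ⁅H, z⁆ = (i : k) • z}`. -/
def gwt (k : Type*) [Field k] {g : Type*} [LieRing g] [LieAlgebra k g]
    (H : g) (i : ℤ) : Submodule k g where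
  carrier := {z | ⁅H, z⁆ = (i : k) • z}
  add_mem' := by
    intro a b ha hb
    simp only [Set.mem_setOf_eq] at *
    rw [lie_add, ha, hb, smul_add]
  zero_mem' := by simp
  smul_mem' := by
    intro c a ha
    simp only [Set.mem_setOf_eq] at *
    rw [lie_smul, ha]
    exact smul_comm c ((i : k)) a

/-- The sum `⨆ {i ≥ n} g_i` of the eigenspaces of `ad H` with eigenvalue at least `n`. -/
def vsp (k : Type*) [Field k] {g : Type*} [LieRing g] [LieAlgebra k g]
    (H : g) (n : ℤ) : Submodule k g :=
  ⨆ i : ℤ, ⨆ _ : n ≤ i, gwt k H i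

/-- The commutator subspace `⁅V, V⁆`: the `k`-span of all brackets of pairs of
elements of `V`. -/
def brkt (k : Type*) [Field k] {g : Type*} [LieRing g] [LieAlgebra k g]
    (V : Submodule k g) : Submodule k g :=
  Submodule.span k {w : g | ∃ a ∈ V, ∃ b ∈ V, w = ⁅a, b⁆}

lemma mem_gwt {k : Type*} [Field k] {g : Type*} [LieRing g] [LieAlgebra k g]
    {H : g} {i : ℤ} {z : g} : z ∈ gwt k H i ↔ ⁅H, z⁆ = (i : k) • z := Iff.rfl

lemma lie_mem_gwt {k : Type*} [Field k] {g : Type*} [LieRing g] [LieAlgebra k g]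
    {H : g} {i j : ℤ} {a b : g} (ha : a ∈ gwt k H i) (hb : b ∈ gwt k H j) :
    ⁅a, b⁆ ∈ gwt k H (i + j) := by
  rw [mem_gwt] at *
  rw [leibniz_lie, ha, hb, smul_lie, lie_smul, ← add_smul]
  push_cast
  rfl

lemma gwt_le_vsp {k : Type*} [Field k] {g : Type*} [LieRing g] [LieAlgebra k g]
    {H : g} {n i : ℤ} (h : n ≤ i) : gwt k H i ≤ vsp k H n :=
  le_iSup₂_of_le (f := fun (i : ℤ) (_ : n ≤ i) => gwt k H i) i h le_rfl

lemma vsp_induction {k : Type*} [Field k] {g : Type*} [LieRing g] [LieAlgebra k g]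
    {H : g} {n : ℤ} {S : Submodule k g} (h : ∀ i, n ≤ i → gwt k H i ≤ S) :
    vsp k H n ≤ S := iSup₂_le h

lemma pow_mem_gwt {k : Type*} [Field k] {g : Type*} [LieRing g] [LieAlgebra k g]
    {H x : g} (hx : x ∈ gwt k H 2) {i : ℤ} {w : g} (hw : w ∈ gwt k H i) (n : ℕ) :
    ((LieAlgebra.ad k g x) ^ n) w ∈ gwt k H (i + 2 * n) := by
  induction n with
  | zero => simpa using hw
  | succ n ih =>
    rw [pow_succ', Module.End.mul_apply, LieAlgebra.ad_apply]
    convert lie_mem_gwt hx ih using 2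
    push_cast
    ring

lemma pow_comm {k : Type*} [Field k] {g : Type*} [LieRing g] [LieAlgebra k g]
    {H x Y : g} (hx : x ∈ gwt k H 2) (hxY : ⁅x, Y⁆ = H)
    {i : ℤ} {w : g} (hw : w ∈ gwt k H i) (n : ℕ) :
    ((LieAlgebra.ad k g x) ^ (n + 1)) ⁅Y, w⁆ = ⁅Y, ((LieAlgebra.ad k g x) ^ (n + 1)) w⁆
      + (((n : k) + 1) * (i + n)) • ((LieAlgebra.ad k g x) ^ n) w := by
  induction n with
  | zero =>
    have := mem_gwt.1 hw
    simp [leibniz_lie x Y w, hxY, this, add_comm]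
  | succ n ih =>
    have e : ∀ (m : ℕ) (v : g), ((LieAlgebra.ad k g x) ^ (m + 1)) v
        = ⁅x, ((LieAlgebra.ad k g x) ^ m) v⁆ := fun m v => by
      rw [pow_succ', Module.End.mul_apply, LieAlgebra.ad_apply]
    rw [e (n + 1) ⁅Y, w⁆, ih, lie_add, lie_smul, leibniz_lie x Y, hxY,
      mem_gwt.1 (pow_mem_gwt hx hw (n + 1)), ← e, ← e]
    push_cast
    module

lemma exists_pow_eq_zero {k : Type*} [Field k] [CharZero k]
    {g : Type*} [LieRing g] [LieAlgebra k g] [FiniteDimensional k g]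
    {H x : g} (hx : x ∈ gwt k H 2) {i : ℤ} {w : g} (hw : w ∈ gwt k H i) :
    ∃ n : ℕ, ((LieAlgebra.ad k g x) ^ n) w = 0 := by
  by_contra! hc
  have hfin := Module.End.finite_hasEigenvalue (LieAlgebra.ad k g H)
  refine Set.infinite_of_injective_forall_mem (f := fun n : ℕ => ((i + 2 * n : ℤ) : k)) ?_ ?_ hfin
  · intro a b hab
    have := Int.cast_injective (α := k) hab
    omega
  · intro n
    exact Module.End.hasEigenvalue_of_hasEigenvector
      (x := ((LieAlgebra.ad k g x) ^ n) w)
      ⟨Module.End.mem_eigenspace_iff.2 (pow_mem_gwt hx hw n), hc n⟩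

lemma surj_aux {k : Type*} [Field k] [CharZero k]
    {g : Type*} [LieRing g] [LieAlgebra k g]
    {H x Y : g} (hx : x ∈ gwt k H 2) (hY : Y ∈ gwt k H (-2)) (hxY : ⁅x, Y⁆ = H)
    {i : ℤ} (hi : 1 ≤ i) (n : ℕ) : ∀ w ∈ gwt k H i, ((LieAlgebra.ad k g x) ^ n) w = 0 →
      ∃ u ∈ gwt k H (i - 2), ⁅x, u⁆ = w := by
  induction n with
  | zero =>
    intro w _ h
    exact ⟨0, zero_mem _, by simpa using h.symm⟩
  | succ n ih =>
    intro w hw h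
    have hc : ((n : k) + 1) * (i + n) ≠ 0 := by
      have : ((n : ℤ) + 1) * (i + n) ≠ 0 := by positivity
      exact_mod_cast (Int.cast_ne_zero (α := k)).2 this
    have hYw : ⁅Y, w⁆ ∈ gwt k H (i - 2) := by
      convert lie_mem_gwt hY hw using 2
      ring
    have hxYw : ⁅x, ⁅Y, w⁆⁆ ∈ gwt k H i := by
      convert lie_mem_gwt hx hYw using 2
      ring
    have key := pow_comm hx hxY hw n
    rw [h, lie_zero, zero_add, pow_succ, Module.End.mul_apply, LieAlgebra.ad_apply] at key
    obtain ⟨u, hu, hu'⟩ := ih (w - (((n : k) + 1) * (i + n))⁻¹ • ⁅x, ⁅Y, w⁆⁆)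
      (sub_mem hw (Submodule.smul_mem _ _ hxYw)) (by
        rw [map_sub, map_smul, key, smul_smul, inv_mul_cancel₀ hc, one_smul, sub_self])
    refine ⟨u + (((n : k) + 1) * (i + n))⁻¹ • ⁅Y, w⁆,
      add_mem hu (Submodule.smul_mem _ _ hYw), ?_⟩
    rw [lie_add, hu', lie_smul, sub_add_cancel]

/-- With `𝔳 = ⨆ {i ≥ 2} g_i`, the commutator subspace `⁅𝔳, 𝔳⁆` equals
`⨆ {i ≥ 4} g_i`. -/
theorem stmt6 {k : Type*} [Field k] [CharZero k]
    {g : Type*} [LieRing g] [LieAlgebra k g] [FiniteDimensional k g]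
    (H x Y : g) (hHx : ⁅H, x⁆ = (2 : k) • x) (hHY : ⁅H, Y⁆ = (-2 : k) • Y)
    (hxY : ⁅x, Y⁆ = H) :
    brkt k (vsp k H 2) = vsp k H 4 := by
  have hx : x ∈ gwt k H 2 := by rw [mem_gwt, hHx]; norm_num
  have hY : Y ∈ gwt k H (-2) := by rw [mem_gwt, hHY]; norm_num
  apply le_antisymm
  · refine Submodule.span_le.2 ?_
    rintro _ ⟨a, ha, b, hb, rfl⟩
    have h1 : ∀ i, 2 ≤ i → ∀ a ∈ gwt k H i, ⁅a, b⁆ ∈ vsp k H 4 := by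
      intro i hi a ha
      have : vsp k H 2 ≤ (vsp k H 4).comap (LieAlgebra.ad k g a) := by
        refine vsp_induction fun j hj b hb => ?_
        exact gwt_le_vsp (by omega) (lie_mem_gwt ha hb)
      exact this hb
    have h2 : vsp k H 2 ≤ (vsp k H 4).comap (LieAlgebra.ad k g b) := by
      refine vsp_induction fun i hi a ha => ?_
      rw [Submodule.mem_comap, LieAlgebra.ad_apply, ← lie_skew]
      exact neg_mem (h1 i hi a ha)
    have h3 := h2 ha
    rw [Submodule.mem_comap, LieAlgebra.ad_apply] at h3
    rw [← lie_skew]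
    exact neg_mem h3
  · refine vsp_induction fun i hi w hw => ?_
    obtain ⟨n, hn⟩ := exists_pow_eq_zero hx hw
    obtain ⟨u, hu, rfl⟩ := surj_aux hx hY hxY (by omega) n w hw hn
    exact Submodule.subset_span
      ⟨x, gwt_le_vsp le_rfl hx, u, gwt_le_vsp (by omega) hu, rfl⟩
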